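/- Let A be a central simple algebra of degree m over a field F, let 1 ≤ i < m, and let E/F be a field extension. Then the generalized Severi–Brauer variety SB_i(A) has an E-point if and only if ind(A ⊗_F E) divides i. -/

import Mathlib

open scoped TensorProduct

/-- Brauer equivalence of two algebras over a field `K`:
`Mₙ(A) ≅ Mₘ(B)` as `K`-algebras for some `n, m ≥ 1`. -/
def BrEquiv (K : Type) [Field K] (A B : Type) [Ring A] [Algebra K A]
    [Ring B] [Algebra K B] : Prop :=
  ∃ n m : ℕ, 0 < n ∧ 0 < m ∧
    Nonempty (Matrix (Fin n) (Fin n) A ≃ₐ[K] Matrix (Fin m) (Fin m) B)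

/-- `A` is a central simple algebra over the field `K`. -/
def IsCSA (K : Type) [Field K] (A : Type) [Ring A] [Algebra K A] : Prop :=
  Algebra.IsCentral K A ∧ IsSimpleRing A ∧ FiniteDimensional K A

/-- Witness that the division algebra in the Brauer class of `A` has degree `d`. -/
structure DivAlgRep (K : Type) [Field K] (A : Type) [Ring A] [Algebra K A] (d : ℕ) where
  D : Type
  [divD : DivisionRing D]
  [algD : Algebra K D]
  equiv : BrEquiv K A D
  rank : Module.finrank K D = d * d

attribute [instance] DivAlgRep.divD DivAlgRep.algD

/-- The index of a central simple algebra: the degree of the division algebra in its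
Brauer class. -/
noncomputable def csIndex (K : Type) [Field K] (A : Type) [Ring A] [Algebra K A] : ℕ :=
  sInf {d : ℕ | Nonempty (DivAlgRep K A d)}

/-- The period of a central simple algebra: the order of its class in the Brauer group,
i.e. the least `p ≥ 1` with `A^{⊗p}` split. -/
noncomputable def csPeriod (K : Type) [Field K] (A : Type) [Ring A] [Algebra K A] : ℕ :=
  sInf {p : ℕ | 0 < p ∧ BrEquiv K (⨂[K] (_ : Fin p), A) K}

/-- `Br_l dim(K) ≤ d`: for every finite extension `L/K` and every central simple
`L`-algebra `A` of period a power of `l`, `ind(A) ∣ per(A)^d`. -/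
def BrDimLE (K : Type) [Field K] (l : ℕ) (d : ℕ) : Prop :=
  ∀ (L : Type) [Field L] [Algebra K L], FiniteDimensional K L →
    ∀ (A : Type) [Ring A] [Algebra L A], IsCSA L A →
      (∃ e : ℕ, csPeriod L A = l ^ e) → csIndex L A ∣ csPeriod L A ^ d

/-!
Let `R = E ⊗ A`. Since `A` is central simple, `R` is simple, hence `R ≅ Mₙ(D)` with `D` a division
algebra; as `R` has dimension `m²`, `D` has dimension `d²` with `m = nd`. The right ideals of `R`
are the left ideals of `Mₙ(Dᵒᵖ)`, that is, sums of copies of the simple module of column vectors,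
which has dimension `nd² = md`. Every number `k ≤ n` of copies occurs, so a right ideal of dimension
`im` exists iff `d ∣ i`. The dimensions of left ideals are invariant under isomorphism of algebras;
comparing the least positive one with the total dimension shows that `R` determines `d`, which is
therefore the index.
-/

section TensorProduct

variable {F A B : Type*} [CommRing F] [Ring A] [Algebra F A] [Ring B] [Algebra F B]
  {ι : Type*} (b : Module.Basis ι F B)

theorem basis_repr_tmul_one_mul (a : A) (x : A ⊗[F] B) (j : ι) :
    (Algebra.TensorProduct.basis A b).repr ((a ⊗ₜ 1) * x) j =
      a * (Algebra.TensorProduct.basis A b).repr x j := by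
  induction x with
  | zero => simp
  | tmul c e => simp [mul_assoc]
  | add x y hx hy => simp [mul_add, hx, hy]

theorem basis_repr_mul_tmul_one (x : A ⊗[F] B) (a : A) (j : ι) :
    (Algebra.TensorProduct.basis A b).repr (x * (a ⊗ₜ 1)) j =
      (Algebra.TensorProduct.basis A b).repr x j * a := by
  induction x with
  | zero => simp
  | tmul c e => simp [mul_assoc, Algebra.commutes]
  | add x y hx hy => simp [add_mul, hx, hy]

theorem exists_mem_basis_repr_eq_one [IsSimpleRing A] {I : TwoSidedIdeal (A ⊗[F] B)}
    {x : A ⊗[F] B} (hx : x ∈ I) {j₀ : ι}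
    (hj₀ : (Algebra.TensorProduct.basis A b).repr x j₀ ≠ 0) :
    ∃ y ∈ I, (Algebra.TensorProduct.basis A b).repr y j₀ = 1 ∧
      ∀ j, (Algebra.TensorProduct.basis A b).repr x j = 0 →
        (Algebra.TensorProduct.basis A b).repr y j = 0 := by
  set coord := (Algebra.TensorProduct.basis A b).repr
  let leading : TwoSidedIdeal A := TwoSidedIdeal.mk'
    {a | ∃ y ∈ I, coord y j₀ = a ∧ ∀ j, coord x j = 0 → coord y j = 0}
    ⟨0, I.zero_mem, by simp, by simp⟩
    (by
      rintro _ _ ⟨y, hy, rfl, hy₀⟩ ⟨z, hz, rfl, hz₀⟩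
      exact ⟨y + z, I.add_mem hy hz, by simp, fun j hj => by simp [hy₀ j hj, hz₀ j hj]⟩)
    (by
      rintro _ ⟨y, hy, rfl, hy₀⟩
      exact ⟨-y, I.neg_mem hy, by simp, fun j hj => by simp [hy₀ j hj]⟩)
    (by
      rintro a _ ⟨y, hy, rfl, hy₀⟩
      exact ⟨(a ⊗ₜ 1) * y, I.mul_mem_left _ _ hy, basis_repr_tmul_one_mul b a y j₀,
        fun j hj => by rw [basis_repr_tmul_one_mul b a y j, hy₀ j hj, mul_zero]⟩)
    (by
      rintro _ a ⟨y, hy, rfl, hy₀⟩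
      exact ⟨y * (a ⊗ₜ 1), I.mul_mem_right _ _ hy, basis_repr_mul_tmul_one b y a j₀,
        fun j hj => by rw [basis_repr_mul_tmul_one b y a j, hy₀ j hj, zero_mul]⟩)
  have one_mem : (1 : A) ∈ leading :=
    IsSimpleRing.one_mem_of_ne_zero_mem leading hj₀
      ((TwoSidedIdeal.mem_mk' ..).mpr ⟨x, hx, rfl, fun _ => id⟩)
  obtain ⟨y, hy, hy_one, hy_zero⟩ := (TwoSidedIdeal.mem_mk' _ _ _ _ _ _ _).mp one_mem
  exact ⟨y, hy, hy_one, hy_zero⟩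

theorem exists_eq_one_tmul_of_commute [Algebra.IsCentral F A] [Module.Free F B] {y : A ⊗[F] B}
    (hy : ∀ a : A, (a ⊗ₜ 1) * y = y * (a ⊗ₜ 1)) : ∃ c : B, y = 1 ⊗ₜ c := by
  have hmem : y ∈ Subalgebra.centralizer F
      (Algebra.TensorProduct.includeLeft : A →ₐ[F] A ⊗[F] B).range := by
    rw [Subalgebra.mem_centralizer_iff]
    rintro _ ⟨a, rfl⟩
    exact hy a
  rw [Subalgebra.centralizer_coe_range_includeLeft_eq_center_tensorProduct] at hmem
  obtain ⟨z, rfl⟩ := hmem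
  clear hy
  induction z with
  | zero => exact ⟨0, by simp⟩
  | tmul a c =>
    obtain ⟨r, hr⟩ := Algebra.mem_bot.mp (Algebra.IsCentral.out a.2)
    refine ⟨r • c, ?_⟩
    change a.1 ⊗ₜ c = _
    rw [← hr, Algebra.algebraMap_eq_smul_one, TensorProduct.smul_tmul]
  | add z w hz hw =>
    obtain ⟨c, hc⟩ := hz
    obtain ⟨d, hd⟩ := hw
    exact ⟨c + d, by rw [map_add, hc, hd, TensorProduct.tmul_add]⟩

theorem exists_one_tmul_mem_of_ne_bot [Algebra.IsCentral F A] [IsSimpleRing A]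
    [Module.Free F B] {I : TwoSidedIdeal (A ⊗[F] B)} (hI : I ≠ ⊥) :
    ∃ c : B, c ≠ 0 ∧ (1 : A) ⊗ₜ[F] c ∈ I := by
  classical
  let b := Module.Free.chooseBasis F B
  set coord := (Algebra.TensorProduct.basis A b).repr
  obtain ⟨x₀, hx₀I, hx₀⟩ : ∃ x ∈ I, x ≠ 0 := by
    simpa using SetLike.exists_of_lt (bot_lt_iff_ne_bot.mpr hI)
  obtain ⟨x, ⟨hxI, hx⟩, hmin⟩ := exists_minimalFor_of_wellFoundedLT
    (fun x => x ∈ I ∧ x ≠ 0) (fun x => (coord x).support) ⟨x₀, hx₀I, hx₀⟩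
  obtain ⟨j₀, hj₀⟩ : ∃ j, coord x j ≠ 0 :=
    Finsupp.ne_iff.mp ((map_ne_zero_iff coord coord.injective).mpr hx)
  obtain ⟨y, hyI, hy_one, hy_zero⟩ := exists_mem_basis_repr_eq_one b hxI hj₀
  -- The commutator of `y` with `a ⊗ 1` lies in `I` and lives on the support of `x` without `j₀`,
  -- so it vanishes by minimality of that support.
  have hcomm (a : A) : (a ⊗ₜ 1) * y = y * (a ⊗ₜ 1) := by
    have hcoord (j) : coord ((a ⊗ₜ 1) * y - y * (a ⊗ₜ 1)) j = a * coord y j - coord y j * a := by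
      rw [map_sub, Finsupp.sub_apply, basis_repr_tmul_one_mul b, basis_repr_mul_tmul_one b]
    by_contra hne
    refine hj₀ (Finsupp.notMem_support_iff.mp fun hmem => ?_)
    refine Finsupp.mem_support_iff.mp (hmin (j := (a ⊗ₜ 1) * y - y * (a ⊗ₜ 1))
      ⟨I.sub_mem (I.mul_mem_left _ _ hyI) (I.mul_mem_right _ _ hyI), sub_ne_zero.mpr hne⟩
      (fun j => ?_) hmem) ?_
    · rw [Finsupp.mem_support_iff, Finsupp.mem_support_iff, not_imp_not, hcoord]
      intro hj
      rw [hy_zero j hj, mul_zero, zero_mul, sub_zero]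
    · rw [hcoord, hy_one, mul_one, one_mul, sub_self]
  obtain ⟨c, rfl⟩ := exists_eq_one_tmul_of_commute hcomm
  refine ⟨c, ?_, hyI⟩
  rintro rfl
  simp at hy_one

theorem isSimpleRing_tensorProduct (F A B : Type*) [CommRing F] [Ring A] [Algebra F A]
    [Ring B] [Algebra F B] [Module.Free F B] [Algebra.IsCentral F A] [IsSimpleRing A]
    [IsSimpleRing B] :
    IsSimpleRing (A ⊗[F] B) := by
  refine IsSimpleRing.of_eq_bot_or_eq_top fun I => or_iff_not_imp_left.mpr fun hI => ?_
  obtain ⟨c, hc, hcI⟩ := exists_one_tmul_mem_of_ne_bot hI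
  have one_mem : (1 : B) ∈ I.comap (Algebra.TensorProduct.includeRight : B →ₐ[F] A ⊗[F] B) :=
    IsSimpleRing.one_mem_of_ne_zero_mem _ hc ((TwoSidedIdeal.mem_comap _).mpr hcI)
  exact I.one_mem_iff.mp ((TwoSidedIdeal.mem_comap _).mp one_mem)

end TensorProduct

section Isotypic

variable {S V : Type*} [Ring S] [AddCommGroup V] [Module S V]

theorem isIsotypicOfType_pi (ι : Type*) [IsSimpleModule S V] : IsIsotypicOfType S (ι → V) V := by
  intro N _
  have := IsSimpleModule.nontrivial S N
  obtain ⟨x, hx⟩ := exists_ne (0 : N)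
  obtain ⟨i, hi⟩ : ∃ i, (x : ι → V) i ≠ 0 := Function.ne_iff.mp (Subtype.coe_ne_coe.mpr hx)
  have hproj : LinearMap.proj i ∘ₗ N.subtype ≠ 0 := fun h => hi (DFunLike.congr_fun h x)
  exact ⟨.ofBijective _ (LinearMap.bijective_of_ne_zero hproj)⟩

variable {K M : Type*} [Field K] [Algebra K S] [Module K V] [IsScalarTower K S V]
  [Module.Finite K V] [AddCommGroup M] [Module S M] [Module K M] [IsScalarTower K S M]

theorem finrank_eq_card_mul_of_linearEquiv_pi {ι : Type*} [Fintype ι] (e : M ≃ₗ[S] (ι → V)) :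
    Module.finrank K M = Fintype.card ι * Module.finrank K V := by
  rw [(e.restrictScalars K).finrank_eq, Module.finrank_pi_fintype, Finset.sum_const,
    Finset.card_univ, smul_eq_mul]

theorem finrank_dvd_of_isIsotypicOfType [IsSemisimpleModule S M] [Module.Finite S M]
    (h : IsIsotypicOfType S M V) : Module.finrank K V ∣ Module.finrank K M := by
  obtain ⟨n, ⟨e⟩⟩ := h.linearEquiv_fun
  exact ⟨n, by rw [finrank_eq_card_mul_of_linearEquiv_pi e, Fintype.card_fin, mul_comm]⟩

theorem exists_submodule_pi_finrank_eq {ι : Type*} [Fintype ι] {k : ℕ} (hk : k ≤ Fintype.card ι) :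
    ∃ N : Submodule S (ι → V), Module.finrank K N = k * Module.finrank K V := by
  classical
  obtain ⟨s, -, hs⟩ := Finset.exists_subset_card_eq (s := (Finset.univ : Finset ι)) hk
  have e := LinearMap.iInfKerProjEquiv S (fun _ : ι => V) (I := s) (J := (s : Set ι)ᶜ)
    disjoint_compl_right (by simp)
  exact ⟨_, by rw [finrank_eq_card_mul_of_linearEquiv_pi e]; simp [hs]⟩

end Isotypic

section LeftIdeals

/-- The set of `K`-dimensions of the left ideals of a `K`-algebra `S`. Right ideals of `R` are
treated as left ideals of `Rᵐᵒᵖ`. -/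
def leftIdealFinranks (K S : Type*) [Field K] [Ring S] [Algebra K S] : Set ℕ :=
  Set.range fun I : Ideal S => Module.finrank K I

variable {K : Type*} [Field K]

theorem leftIdealFinranks_subset_of_algEquiv {R S : Type*} [Ring R] [Algebra K R] [Ring S]
    [Algebra K S] (e : R ≃ₐ[K] S) : leftIdealFinranks K R ⊆ leftIdealFinranks K S := by
  rintro _ ⟨I, rfl⟩
  refine ⟨I.comap e.symm, ?_⟩
  have hmap : (I.comap e.symm).restrictScalars K =
      (I.restrictScalars K).map e.toLinearEquiv.toLinearMap := by
    ext x
    simp [Submodule.mem_map_equiv]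
  calc Module.finrank K (I.comap e.symm)
      = Module.finrank K ((I.restrictScalars K).map e.toLinearEquiv.toLinearMap) := by
        rw [← hmap]; rfl
    _ = Module.finrank K I := e.toLinearEquiv.finrank_map_eq (I.restrictScalars K)

theorem leftIdealFinranks_congr {R S : Type*} [Ring R] [Algebra K R] [Ring S]
    [Algebra K S] (e : R ≃ₐ[K] S) : leftIdealFinranks K R = leftIdealFinranks K S :=
  (leftIdealFinranks_subset_of_algEquiv e).antisymm (leftIdealFinranks_subset_of_algEquiv e.symm)

theorem mem_leftIdealFinranks_mulOpposite_iff {R : Type*} [Ring R] [Algebra K R] {r : ℕ} :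
    r ∈ leftIdealFinranks K Rᵐᵒᵖ ↔
      ∃ I : Submodule K R, (∀ x ∈ I, ∀ y : R, x * y ∈ I) ∧ Module.finrank K I = r := by
  let op := MulOpposite.opLinearEquiv K (M := R)
  constructor
  · rintro ⟨I, rfl⟩
    exact ⟨(I.restrictScalars K).map op.symm.toLinearMap,
      fun x hx y => (Submodule.mem_map_equiv _).mpr (I.mul_mem_left (.op y)
        ((Submodule.mem_map_equiv _).mp hx)),
      op.symm.finrank_map_eq (I.restrictScalars K)⟩
  · rintro ⟨I, hI, rfl⟩
    let J : Ideal Rᵐᵒᵖ :=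
      { I.map op.toLinearMap with
        smul_mem' := fun y x hx => (Submodule.mem_map_equiv _).mpr
          (hI _ ((Submodule.mem_map_equiv _).mp hx) y.unop) }
    exact ⟨J, op.finrank_map_eq I⟩

variable {S V κ : Type*} [Ring S] [Algebra K S] [AddCommGroup V] [Module S V] [Module K V]
  [IsScalarTower K S V] [Module.Finite K V]

theorem finrank_dvd_of_mem_leftIdealFinranks [Finite κ] [IsSimpleModule S V]
    (e : S ≃ₗ[S] (κ → V)) {r : ℕ} (hr : r ∈ leftIdealFinranks K S) : Module.finrank K V ∣ r := by
  obtain ⟨I, rfl⟩ := hr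
  have hS : IsIsotypicOfType S S V :=
    (isIsotypicOfType_pi κ).of_injective e.toLinearMap e.injective
  have hI : IsIsotypicOfType S I V := hS.of_injective I.subtype I.subtype_injective
  have := e.isSemisimpleModule_iff.mpr inferInstance
  exact finrank_dvd_of_isIsotypicOfType hI

theorem mul_finrank_mem_leftIdealFinranks [Fintype κ] (e : S ≃ₗ[S] (κ → V)) {k : ℕ}
    (hk : k ≤ Fintype.card κ) : k * Module.finrank K V ∈ leftIdealFinranks K S := by
  obtain ⟨N, hN⟩ := exists_submodule_pi_finrank_eq (K := K) (S := S) (V := V) hk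
  refine ⟨N.map e.symm.toLinearMap, ?_⟩
  rw [← hN]
  exact ((e.symm.submoduleMap N).restrictScalars K).finrank_eq.symm

end LeftIdeals

section Matrix

open scoped Matrix.Module

theorem isSimpleModule_matrix_pi (ι R M : Type*) [Fintype ι] [DecidableEq ι] [Nonempty ι] [Ring R]
    [AddCommGroup M] [Module R M] [IsSimpleModule R M] :
    IsSimpleModule (Matrix ι ι R) (ι → M) := by
  have := IsSimpleModule.nontrivial R M
  refine isSimpleModule_iff_toSpanSingleton_surjective.mpr ⟨inferInstance, fun v hv w => ?_⟩
  obtain ⟨j, hj⟩ := Function.ne_iff.mp hv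
  choose r hr using fun i => IsSimpleModule.toSpanSingleton_surjective R hj (w i)
  refine ⟨Matrix.of fun i => Pi.single j (r i), funext fun i => ?_⟩
  simpa [Pi.single_apply, ite_smul] using hr i

/-- The regular module of a matrix ring as a sum of copies of the module of column vectors. The
columns are indexed by a separate type `κ`: on `ι → ι → R` the action of matrices on `ι`-tuples
would take precedence over the componentwise one. -/
def matrixEquivColumns {ι κ : Type*} (R : Type*) [Fintype ι] [DecidableEq ι] [Ring R]
    (e : κ ≃ ι) : Matrix ι ι R ≃ₗ[Matrix ι ι R] (κ → ι → R) where
  toFun M k i := M i (e k)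
  invFun v := Matrix.of fun i j => v (e.symm j) i
  map_add' _ _ := rfl
  map_smul' _ _ := rfl
  left_inv _ := by ext; simp
  right_inv _ := by ext; simp

variable {K D ι : Type*} [Field K] [DivisionRing D] [Algebra K D] [Module.Finite K D]
  [Fintype ι] [DecidableEq ι]

theorem finrank_dvd_of_mem_leftIdealFinranks_matrix [Nonempty ι] {r : ℕ}
    (hr : r ∈ leftIdealFinranks K (Matrix ι ι D)) :
    Fintype.card ι * Module.finrank K D ∣ r := by
  have := isSimpleModule_matrix_pi ι D D
  simpa [Module.finrank_pi_fintype] using finrank_dvd_of_mem_leftIdealFinranks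
    (matrixEquivColumns D (Fintype.equivFin ι).symm) hr

theorem mul_mem_leftIdealFinranks_matrix {k : ℕ} (hk : k ≤ Fintype.card ι) :
    k * (Fintype.card ι * Module.finrank K D) ∈ leftIdealFinranks K (Matrix ι ι D) := by
  simpa [Module.finrank_pi_fintype] using mul_finrank_mem_leftIdealFinranks (K := K) (k := k)
    (matrixEquivColumns D (Fintype.equivFin ι).symm) (by simpa using hk)

theorem finrank_eq_of_matrix_algEquiv [Nonempty ι] {κ D' : Type*} [DivisionRing D'] [Algebra K D']
    [Module.Finite K D'] [Fintype κ] [DecidableEq κ] [Nonempty κ]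
    (e : Matrix ι ι D ≃ₐ[K] Matrix κ κ D') : Module.finrank K D = Module.finrank K D' := by
  have hsimple : Fintype.card ι * Module.finrank K D = Fintype.card κ * Module.finrank K D' := by
    apply Nat.dvd_antisymm
    · apply finrank_dvd_of_mem_leftIdealFinranks_matrix (K := K)
      rw [leftIdealFinranks_congr e]
      simpa using mul_mem_leftIdealFinranks_matrix (K := K) (D := D') (ι := κ) Fintype.card_pos
    · apply finrank_dvd_of_mem_leftIdealFinranks_matrix (K := K)
      rw [← leftIdealFinranks_congr e]
      simpa using mul_mem_leftIdealFinranks_matrix (K := K) (D := D) (ι := ι) Fintype.card_pos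
  have htotal := e.toLinearEquiv.finrank_eq
  rw [Module.finrank_matrix, Module.finrank_matrix, mul_assoc, mul_assoc, ← hsimple] at htotal
  have hcard : Fintype.card ι = Fintype.card κ :=
    Nat.eq_of_mul_eq_mul_right (Nat.mul_pos Fintype.card_pos Module.finrank_pos) htotal
  rw [← hcard] at hsimple
  exact Nat.eq_of_mul_eq_mul_left Fintype.card_pos hsimple

theorem finite_of_finite_matrix (K D ι : Type*) [CommSemiring K] [Semiring D] [Algebra K D]
    [Nonempty ι] [Module.Finite K (Matrix ι ι D)] : Module.Finite K D :=
  let i := Classical.arbitrary ι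
  .of_surjective (Matrix.entryLinearMap K D i i) fun d => ⟨fun _ _ => d, rfl⟩

end Matrix

section Index

universe u

variable {K R : Type} [Field K] [Ring R] [Algebra K R]

theorem csIndex_eq_of_algEquiv_matrix {D : Type} [DivisionRing D] [Algebra K D]
    [Module.Finite K D] {n d : ℕ} [NeZero n] (e : R ≃ₐ[K] Matrix (Fin n) (Fin n) D)
    (hd : Module.finrank K D = d * d) : csIndex K R = d := by
  suffices {d' : ℕ | Nonempty (DivAlgRep K R d')} = {d} by
    rw [csIndex, this, csInf_singleton]
  refine Set.eq_singleton_iff_unique_mem.mpr ⟨?_, ?_⟩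
  · let f : Matrix (Fin 1) (Fin 1) R ≃ₐ[K] Matrix (Fin n) (Fin n) D :=
      (e.mapMatrix.trans (Matrix.compAlgEquiv (Fin 1) (Fin n) D K)).trans
        (Matrix.reindexAlgEquiv K D (Equiv.uniqueProd (Fin n) (Fin 1)))
    exact ⟨D, ⟨1, n, one_pos, NeZero.pos n, ⟨f⟩⟩, hd⟩
  · rintro d' ⟨D', ⟨a, b, ha, hb, ⟨f⟩⟩, hd'⟩
    have := NeZero.of_pos ha
    have := NeZero.of_pos hb
    let g : Matrix (Fin a × Fin n) (Fin a × Fin n) D ≃ₐ[K] Matrix (Fin b) (Fin b) D' :=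
      (Matrix.compAlgEquiv (Fin a) (Fin n) D K).symm.trans (e.symm.mapMatrix.trans f)
    have := Module.Finite.equiv g.toLinearEquiv
    have := finite_of_finite_matrix K D' (Fin b)
    have hdd' := finrank_eq_of_matrix_algEquiv g
    rw [hd, hd'] at hdd'
    exact (Nat.mul_self_inj.mp hdd').symm

theorem exists_algEquiv_matrix_of_finrank_eq_mul_self (K : Type*) {R : Type u} [Field K] [Ring R]
    [Algebra K R] [IsSimpleRing R] [Module.Finite K R] {m : ℕ}
    (hm : Module.finrank K R = m * m) :
    ∃ (n d : ℕ) (_ : NeZero n) (D : Type u) (_ : DivisionRing D) (_ : Algebra K D)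
      (_ : Module.Finite K D), m = n * d ∧ Module.finrank K D = d * d ∧
        Nonempty (R ≃ₐ[K] Matrix (Fin n) (Fin n) D) := by
  have := IsArtinianRing.of_finite K R
  obtain ⟨n, hn, D, _, _, _, ⟨e⟩⟩ := IsSimpleRing.exists_algEquiv_matrix_divisionRing_finite K R
  have hdim : m * m = n * n * Module.finrank K D := by
    rw [← hm, e.toLinearEquiv.finrank_eq, Module.finrank_matrix, Fintype.card_fin]
  obtain ⟨d, rfl⟩ : n ∣ m := (Nat.pow_dvd_pow_iff two_ne_zero).mp (by rw [sq, sq]; exact ⟨_, hdim⟩)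
  refine ⟨n, d, hn, D, _, _, ‹_›, rfl, ?_, ⟨e⟩⟩
  apply Nat.eq_of_mul_eq_mul_left (Nat.mul_pos (NeZero.pos n) (NeZero.pos n))
  rw [← hdim, mul_mul_mul_comm]

theorem exists_rightIdeal_finrank_eq_mul_iff_csIndex_dvd [IsSimpleRing R] [Module.Finite K R]
    {m i : ℕ} (hm : Module.finrank K R = m * m) (him : i ≤ m) :
    (∃ I : Submodule K R, (∀ x ∈ I, ∀ y : R, x * y ∈ I) ∧ Module.finrank K I = i * m) ↔
      csIndex K R ∣ i := by
  obtain ⟨n, d, _, D, _, _, _, rfl, hd, ⟨e⟩⟩ := exists_algEquiv_matrix_of_finrank_eq_mul_self K hm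
  have hd_pos : 0 < d := Nat.pos_of_mul_pos_left (hd ▸ Module.finrank_pos)
  have hdop : Fintype.card (Fin n) * Module.finrank K Dᵐᵒᵖ = d * (n * d) := by
    rw [(MulOpposite.opLinearEquiv K (M := D)).symm.finrank_eq, hd, Fintype.card_fin,
      mul_left_comm]
  rw [← mem_leftIdealFinranks_mulOpposite_iff, csIndex_eq_of_algEquiv_matrix e hd,
    leftIdealFinranks_congr (e.op.trans AlgEquiv.mopMatrix.symm)]
  constructor
  · intro hi
    have hdvd := finrank_dvd_of_mem_leftIdealFinranks_matrix hi
    rw [hdop] at hdvd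
    exact Nat.dvd_of_mul_dvd_mul_right (Nat.mul_pos (NeZero.pos n) hd_pos) hdvd
  · rintro ⟨k, rfl⟩
    have hk : k ≤ n := Nat.le_of_mul_le_mul_left (mul_comm n d ▸ him) hd_pos
    have := mul_mem_leftIdealFinranks_matrix (K := K) (D := Dᵐᵒᵖ) (ι := Fin n) (k := k)
      (by simpa using hk)
    rwa [hdop, ← mul_assoc, mul_comm k d] at this

end Index

/-- let `A` be a central simple algebra of degree `m` over `F`,
`1 ≤ i < m`, and `E/F` a field extension.  The generalized Severi–Brauer variety
`SB_i(A)` has an `E`-point — i.e. `A ⊗_F E` has a right ideal of reduced dimension `i`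
which is a direct summand — if and only if `ind(A ⊗_F E) ∣ i`. -/
theorem stmt18 (F : Type) [Field F] (A : Type) [Ring A] [Algebra F A]
    (hA : IsCSA F A) (m : ℕ) (hdeg : Module.finrank F A = m * m)
    (i : ℕ) (hi1 : 1 ≤ i) (him : i < m)
    (E : Type) [Field E] [Algebra F E] :
    (∃ I : Submodule E (E ⊗[F] A),
        (∀ x ∈ I, ∀ y : E ⊗[F] A, x * y ∈ I) ∧
        (∃ J : Submodule E (E ⊗[F] A), IsCompl I J) ∧
        Module.finrank E I = i * m) ↔
      csIndex E (E ⊗[F] A) ∣ i := by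
  obtain ⟨_, _, _⟩ := hA
  have : IsSimpleRing (E ⊗[F] A) :=
    have := isSimpleRing_tensorProduct F A E
    .of_ringEquiv (Algebra.TensorProduct.comm F A E).toRingEquiv this
  have hdegE : Module.finrank E (E ⊗[F] A) = m * m := by rw [Module.finrank_baseChange, hdeg]
  rw [← exists_rightIdeal_finrank_eq_mul_iff_csIndex_dvd hdegE him.le]
  simp only [Submodule.exists_isCompl, true_and]
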